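/- arXiv:1412.4203 — 2 statements merged into one kernel-verified Lean document; each statement's English description precedes it below -/
import Mathlib

section
/- Let (Ω_1, μ_1), …, (Ω_M, μ_M) and (Δ, 𝒜, P) be probability spaces, let X_1, …, X_M be measurable spaces, and for each i let x_i : Ω_i × ⋯ × Ω_M → X_i be measurable maps. Let V_i ⊆ X_i × X_{i+1} × Δ for i < M and V_M ⊆ X_M × Δ be measurable 'violation' sets (all relevant sections measurable). Let ε_1, …, ε_M, β_1, …, β_M ∈ (0,1). Assume: (i) μ_M({ω_M : P({δ : (x_M(ω_M), δ) ∈ V_M}) ≤ ε_M}) ≥ 1 - β_M; and (ii) for every i < M and every fixed (ω_{i+1}, …, ω_M), μ_i({ω_i : P({δ : (x_i(ω_i, …, ω_M), x_{i+1}(ω_{i+1}, …, ω_M), δ) ∈ V_i}) ≤ ε_i}) ≥ 1 - β_i. Then the product measure μ_1 ⊗ ⋯ ⊗ μ_M of the set of (ω_1, …, ω_M) such that P({δ : (x_M(ω_M), δ) ∈ V_M, or (x_i(ω_i,…,ω_M), x_{i+1}(ω_{i+1},…,ω_M), δ) ∈ V_i for some i < M}) ≤ Σ_{i=1}^M ε_i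 is at least 1 - Σ_{i=1}^M β_i. -/
/-!
Resampling coordinate `i` leaves the decision of stage `i + 1` unchanged, so the hypothesis on
stage `i` says that the event that the chance constraint of stage `i` fails has `μ i`-measure at
most `β i` on every fibre along the `i`-th coordinate. By Fubini it has probability at most `β i`
under the product measure. Outside the union of these events every stage constraint holds, and a
second union bound, now with respect to `P`, adds up the levels `ε i`.
-/

open MeasureTheory

section

open scoped ENNReal

theorem one_sub_tsum_le_measure_iInter {α ι : Type*} [MeasurableSpace α] [Countable ι]
    {μ : Measure α} [IsProbabilityMeasure μ] {S : ι → Set α}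
    (hS : ∀ i, NullMeasurableSet (S i) μ) {b : ι → ℝ≥0∞} (h : ∀ i, 1 - b i ≤ μ (S i)) :
    1 - ∑' i, b i ≤ μ (⋂ i, S i) := by
  have hcompl (i : ι) : μ (S i)ᶜ ≤ b i := by
    rw [prob_compl_eq_one_sub₀ (hS i)]
    exact tsub_le_iff_tsub_le.mp (h i)
  have hunion : μ (⋂ i, S i)ᶜ ≤ ∑' i, b i := by
    rw [Set.compl_iInter]
    exact (measure_iUnion_le _).trans (ENNReal.tsum_le_tsum hcompl)
  rw [prob_compl_eq_one_sub₀ (.iInter hS)] at hunion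
  exact tsub_le_iff_tsub_le.mp hunion

theorem le_measure_pi_of_forall_le_preimage_update {ι : Type*} [Fintype ι] [DecidableEq ι]
    {Ω : ι → Type*} [∀ i, MeasurableSpace (Ω i)] {μ : ∀ i, Measure (Ω i)}
    [∀ i, IsProbabilityMeasure (μ i)] {S : Set (∀ i, Ω i)} (hS : MeasurableSet S) {b : ℝ≥0∞} (j : ι)
    (h : ∀ ω, b ≤ μ j (Function.update ω j ⁻¹' S)) :
    b ≤ Measure.pi μ S := by
  have hmarginal : ∫⋯∫⁻_{j}, (fun _ => b) ∂μ ≤ ∫⋯∫⁻_{j}, S.indicator 1 ∂μ := by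
    intro ω
    simp only [lmarginal_singleton, lintegral_const, measure_univ, mul_one]
    exact (h ω).trans_eq (lintegral_indicator_one (measurable_update ω hS)).symm
  calc b = ∫⁻ _, b ∂Measure.pi μ := by simp
    _ ≤ ∫⁻ ω, S.indicator 1 ω ∂Measure.pi μ :=
      lintegral_le_of_lmarginal_le {j} measurable_const (measurable_one.indicator hS) hmarginal
    _ = Measure.pi μ S := lintegral_indicator_one hS

section ChanceFeasibleSet

variable {α Δ : Type*} [MeasurableSpace Δ]

/-- The decisions (or randomizations) `a` satisfying the chance constraint at level `ε`: a random
`δ ∼ P` violates the constraint with probability at most `ε`. The constraint is encoded by the set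
`V` of pairs `(a, δ)` that violate it. -/
def chanceFeasibleSet (P : Measure Δ) (V : Set (α × Δ)) (ε : ℝ≥0∞) : Set α :=
  {a | P (Prod.mk a ⁻¹' V) ≤ ε}

theorem measurableSet_chanceFeasibleSet [MeasurableSpace α] (P : Measure Δ) [SFinite P]
    {V : Set (α × Δ)} (hV : MeasurableSet V) (ε : ℝ≥0∞) :
    MeasurableSet (chanceFeasibleSet P V ε) :=
  measurableSet_le (measurable_measure_prodMk_left hV) measurable_const

theorem iInter_chanceFeasibleSet_subset {ι : Type*} [Countable ι] (P : Measure Δ)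
    (V : ι → Set (α × Δ)) (ε : ι → ℝ≥0∞) :
    ⋂ i, chanceFeasibleSet P (V i) (ε i) ⊆ chanceFeasibleSet P (⋃ i, V i) (∑' i, ε i) := by
  intro a ha
  calc P (Prod.mk a ⁻¹' ⋃ i, V i) = P (⋃ i, Prod.mk a ⁻¹' V i) := by rw [Set.preimage_iUnion]
    _ ≤ ∑' i, P (Prod.mk a ⁻¹' V i) := measure_iUnion_le _
    _ ≤ ∑' i, ε i := ENNReal.tsum_le_tsum (Set.mem_iInter.mp ha)

end ChanceFeasibleSet

theorem one_sub_sum_le_pi_chanceFeasibleSet_iUnion {ι Δ : Type*} [Fintype ι] [DecidableEq ι]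
    {Ω : ι → Type*} [∀ i, MeasurableSpace (Ω i)] (μ : ∀ i, Measure (Ω i))
    [∀ i, IsProbabilityMeasure (μ i)] [MeasurableSpace Δ] (P : Measure Δ) [SFinite P]
    {V : ι → Set ((∀ i, Ω i) × Δ)} (hV : ∀ i, MeasurableSet (V i)) {ε β : ι → ℝ≥0∞}
    (h : ∀ i ω, 1 - β i ≤ μ i (Function.update ω i ⁻¹' chanceFeasibleSet P (V i) (ε i))) :
    1 - ∑ i, β i ≤ Measure.pi μ (chanceFeasibleSet P (⋃ i, V i) (∑ i, ε i)) := by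
  have hmeas (i : ι) : MeasurableSet (chanceFeasibleSet P (V i) (ε i)) :=
    measurableSet_chanceFeasibleSet P (hV i) (ε i)
  simp only [← tsum_fintype (L := .unconditional ι)]
  calc 1 - ∑' i, β i ≤ Measure.pi μ (⋂ i, chanceFeasibleSet P (V i) (ε i)) :=
        one_sub_tsum_le_measure_iInter (fun i => (hmeas i).nullMeasurableSet)
          fun i => le_measure_pi_of_forall_le_preimage_update (hmeas i) i (h i)
    _ ≤ Measure.pi μ (chanceFeasibleSet P (⋃ i, V i) (∑' i, ε i)) :=
        measure_mono (iInter_chanceFeasibleSet_subset P V ε)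

section StageViolation

variable {Ω Δ : Type*} {m : ℕ} {X : Fin (m + 1) → Type*}

/-- The pairs `(ω, δ)` for which `δ` violates the constraint of stage `i` at the decisions `x · ω`.
The constraint of a stage before the last one, given by `V`, couples its decision with the next
one; that of the last stage, given by `VM`, involves the last decision alone. -/
def stageViolation (x : ∀ i, Ω → X i) (V : ∀ i : Fin m, Set (X i.castSucc × X i.succ × Δ))
    (VM : Set (X (Fin.last m) × Δ)) : Fin (m + 1) → Set (Ω × Δ) :=
  Fin.snoc (α := fun _ => Set (Ω × Δ))
    (fun i => {p | (x i.castSucc p.1, x i.succ p.1, p.2) ∈ V i})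
    {p | (x (Fin.last m) p.1, p.2) ∈ VM}

variable (x : ∀ i, Ω → X i) (V : ∀ i : Fin m, Set (X i.castSucc × X i.succ × Δ))
  (VM : Set (X (Fin.last m) × Δ))

theorem stageViolation_castSucc (i : Fin m) :
    stageViolation x V VM i.castSucc = {p | (x i.castSucc p.1, x i.succ p.1, p.2) ∈ V i} :=
  Fin.snoc_castSucc ..

theorem stageViolation_last :
    stageViolation x V VM (Fin.last m) = {p | (x (Fin.last m) p.1, p.2) ∈ VM} :=
  Fin.snoc_last ..

theorem iUnion_stageViolation :
    ⋃ i, stageViolation x V VM i = {p | (x (Fin.last m) p.1, p.2) ∈ VM ∨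
      ∃ i : Fin m, (x i.castSucc p.1, x i.succ p.1, p.2) ∈ V i} := by
  ext p
  simp only [Set.mem_iUnion, Fin.exists_fin_succ', stageViolation_castSucc, stageViolation_last,
    Set.mem_ofPred_eq, or_comm]

variable {x V VM} in
theorem measurableSet_stageViolation [MeasurableSpace Ω] [MeasurableSpace Δ]
    [∀ i, MeasurableSpace (X i)] (hx : ∀ i, Measurable (x i)) (hV : ∀ i, MeasurableSet (V i))
    (hVM : MeasurableSet VM) (i : Fin (m + 1)) :
    MeasurableSet (stageViolation x V VM i) := by
  have hdecision (i : Fin (m + 1)) : Measurable fun p : Ω × Δ => x i p.1 :=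
    (hx i).comp measurable_fst
  induction i using Fin.lastCases with
  | last =>
    rw [stageViolation_last]
    exact (hdecision _).prodMk measurable_snd hVM
  | cast i =>
    rw [stageViolation_castSucc]
    exact (hdecision _).prodMk ((hdecision _).prodMk measurable_snd) (hV i)

end StageViolation

theorem abstract_recursive_composition_general {Δ : Type*} [MeasurableSpace Δ] (P : Measure Δ)
    [SFinite P] {m : ℕ} {Ω : Fin (m + 1) → Type*} [∀ i, MeasurableSpace (Ω i)]
    (μ : ∀ i, Measure (Ω i)) [∀ i, IsProbabilityMeasure (μ i)]
    {X : Fin (m + 1) → Type*} [∀ i, MeasurableSpace (X i)]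
    {x : ∀ i, (∀ k, Ω k) → X i} (hx : ∀ i, Measurable (x i))
    (hdep : ∀ i : Fin m, DependsOn (x i.succ) {i.castSucc}ᶜ)
    {V : ∀ i : Fin m, Set (X i.castSucc × X i.succ × Δ)} {VM : Set (X (Fin.last m) × Δ)}
    (hV : ∀ i, MeasurableSet (V i)) (hVM : MeasurableSet VM) {ε β : Fin (m + 1) → ℝ≥0∞}
    (hlast : ∀ ω, 1 - β (Fin.last m) ≤ μ (Fin.last m)
      {w | P {δ | (x (Fin.last m) (Function.update ω (Fin.last m) w), δ) ∈ VM} ≤ ε (Fin.last m)})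
    (hstage : ∀ (i : Fin m) ω, 1 - β i.castSucc ≤ μ i.castSucc
      {w | P {δ | (x i.castSucc (Function.update ω i.castSucc w), x i.succ ω, δ) ∈ V i} ≤
        ε i.castSucc}) :
    1 - ∑ i, β i ≤ Measure.pi μ {ω | P {δ | (x (Fin.last m) ω, δ) ∈ VM ∨
      ∃ i : Fin m, (x i.castSucc ω, x i.succ ω, δ) ∈ V i} ≤ ∑ i, ε i} := by
  have hfibre (i : Fin (m + 1)) (ω : ∀ k, Ω k) : 1 - β i ≤
      μ i (Function.update ω i ⁻¹' chanceFeasibleSet P (stageViolation x V VM i) (ε i)) := by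
    induction i using Fin.lastCases with
    | last =>
      rw [stageViolation_last]
      exact hlast ω
    | cast i =>
      have hnext (w : Ω i.castSucc) : x i.succ (Function.update ω i.castSucc w) = x i.succ ω :=
        hdep i fun k hk => Function.update_of_ne hk w ω
      simpa only [stageViolation_castSucc, chanceFeasibleSet, Set.preimage_ofPred_eq, hnext]
        using hstage i ω
  have hjoint := one_sub_sum_le_pi_chanceFeasibleSet_iUnion μ P
    (measurableSet_stageViolation hx hV hVM) hfibre
  rwa [iUnion_stageViolation] at hjoint

end

/-- Abstract form of the recursive scenario approach with re-sampling (probabilistic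
composition argument), for `M = m + 1` stages: each stage `i` uses an independent
randomization `ω i ∈ Ω i`; the decision `x i` at stage `i` depends only on the
randomizations of stages `≥ i`. If, conditionally on the later stages, the stage-`i`
decision satisfies its chance constraint (w.r.t. the violation set `V i`, resp. `VM`
for the last stage) at level `ε_i` with confidence `1 - β_i`, then under the product
measure the joint chance constraint holds at level `∑ ε_i` with confidence
`1 - ∑ β_i`. -/
theorem abstract_recursive_composition
    {Δ : Type*} [MeasurableSpace Δ] (P : Measure Δ) [IsProbabilityMeasure P]
    (m : ℕ)
    (Ωs : Fin (m + 1) → Type*) [∀ i, MeasurableSpace (Ωs i)]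
    (μs : (i : Fin (m + 1)) → Measure (Ωs i)) [∀ i, IsProbabilityMeasure (μs i)]
    (Xt : Fin (m + 1) → Type*) [∀ i, MeasurableSpace (Xt i)]
    (xs : (i : Fin (m + 1)) → ((k : Fin (m + 1)) → Ωs k) → Xt i)
    (hxmeas : ∀ i, Measurable (xs i))
    -- the stage-`i` decision depends only on the randomizations of stages `i, …, M`:
    (hdep : ∀ (i : Fin (m + 1)) (ω ω' : (k : Fin (m + 1)) → Ωs k),
      (∀ k, i ≤ k → ω k = ω' k) → xs i ω = xs i ω')
    (Vs : (i : Fin m) → Set (Xt i.castSucc × Xt i.succ × Δ))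
    (VM : Set (Xt (Fin.last m) × Δ))
    (hVmeas : ∀ i, MeasurableSet (Vs i)) (hVMmeas : MeasurableSet VM)
    (εs βs : Fin (m + 1) → ℝ)
    (hεs : ∀ i, εs i ∈ Set.Ioo (0 : ℝ) 1) (hβs : ∀ i, βs i ∈ Set.Ioo (0 : ℝ) 1)
    -- (i) last-stage guarantee (the last-stage decision depends only on `ω (last)`):
    (hlast : ∀ ωfix : (k : Fin (m + 1)) → Ωs k,
      1 - ENNReal.ofReal (βs (Fin.last m)) ≤
        μs (Fin.last m) {w | P {δ |
            (xs (Fin.last m) (Function.update ωfix (Fin.last m) w), δ) ∈ VM} ≤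
          ENNReal.ofReal (εs (Fin.last m))})
    -- (ii) stage-wise guarantee, conditionally on every fixed tail randomization:
    (hstage : ∀ (i : Fin m) (ωfix : (k : Fin (m + 1)) → Ωs k),
      1 - ENNReal.ofReal (βs i.castSucc) ≤
        μs i.castSucc {w | P {δ |
            (xs i.castSucc (Function.update ωfix i.castSucc w),
              xs i.succ ωfix, δ) ∈ Vs i} ≤
          ENNReal.ofReal (εs i.castSucc)}) :
    1 - ENNReal.ofReal (∑ i, βs i) ≤
      (Measure.pi μs) {ω | P {δ | (xs (Fin.last m) ω, δ) ∈ VM ∨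
          ∃ i : Fin m, (xs i.castSucc ω, xs i.succ ω, δ) ∈ Vs i} ≤
        ENNReal.ofReal (∑ i, εs i)} := by
  have hsucc (i : Fin m) : DependsOn (xs i.succ) {i.castSucc}ᶜ := fun ω ω' h =>
    hdep i.succ ω ω' fun k hk => h k (Fin.castSucc_lt_succ.trans_le hk).ne'
  rw [ENNReal.ofReal_sum_of_nonneg fun i _ => (hβs i).1.le,
    ENNReal.ofReal_sum_of_nonneg fun i _ => (hεs i).1.le]
  exact abstract_recursive_composition_general P μs hxmeas hsucc hVmeas hVMmeas hlast hstage
end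

section
/- Let d be a positive integer and ε, β ∈ (0,1). If N is a natural number with N ≥ (e/(e-1))·(1/ε)·(d - 1 + ln(1/β)), then Σ_{i=0}^{d-1} (N choose i) ε^i (1-ε)^{N-i} ≤ β. -/
/-- The binomial tail `B(N, ε, d) = ∑_{i=0}^{d-1} (N choose i) ε^i (1-ε)^(N-i)`. -/
noncomputable def binomTail (N : ℕ) (ε : ℝ) (d : ℕ) : ℝ :=
  ∑ i ∈ Finset.range d, (N.choose i : ℝ) * ε ^ i * (1 - ε) ^ (N - i)

/-!
This is Chernoff's method. For `a ≥ 1`, the first `d` terms of the binomial sum are dominated by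
the same terms weighted by `a ^ (d - 1 - i) ≥ 1`; extended to all `i`, the weighted sum is
`a ^ (d - 1) * (1 - ε * (1 - 1 / a)) ^ N` by the binomial theorem, and `1 - x ≤ exp (-x)` bounds
this by `a ^ (d - 1) * exp (-N * ε * (1 - 1 / a))`. Solving for `N` gives a bound for each `a > 1`;
the constant `e / (e - 1)` is the choice `a = e`, for which `log a = 1`.
-/

theorem sum_range_pow_mul_pow_mul_choose_le_add_pow {R : Type*} [CommSemiring R] [PartialOrder R]
    [IsOrderedRing R] {x y : R} (hx : 0 ≤ x) (hy : 0 ≤ y) (N d : ℕ) :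
    ∑ i ∈ Finset.range d, x ^ i * y ^ (N - i) * N.choose i ≤ (x + y) ^ N := by
  have choose_eq_zero : ∀ i ∈ Finset.range d, i ∉ Finset.range d ∩ Finset.range (N + 1) →
      x ^ i * y ^ (N - i) * (N.choose i : R) = 0 := by
    intro i hid hi
    rw [Nat.choose_eq_zero_of_lt (by grind), Nat.cast_zero, mul_zero]
  rw [add_pow, ← Finset.sum_subset Finset.inter_subset_left choose_eq_zero]
  exact Finset.sum_le_sum_of_subset_of_nonneg Finset.inter_subset_right
    fun i _ _ ↦ by positivity

section Chernoff

variable {a ε : ℝ}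

-- The factor `a` is kept on the left because `a ^ (d - 1)` on the right would truncate at `d = 0`.
theorem mul_binomTail_le_pow_mul_pow (ha : 1 ≤ a) (hε₀ : 0 ≤ ε) (hε₁ : ε ≤ 1) (N d : ℕ) :
    a * binomTail N ε d ≤ a ^ d * (ε / a + (1 - ε)) ^ N := by
  have ha₀ : 0 < a := one_pos.trans_le ha
  have one_sub_nonneg : 0 ≤ 1 - ε := sub_nonneg.mpr hε₁
  have term_le : ∀ i ∈ Finset.range d, a * ((N.choose i : ℝ) * ε ^ i * (1 - ε) ^ (N - i)) ≤
      a ^ d * ((ε / a) ^ i * (1 - ε) ^ (N - i) * N.choose i) := by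
    intro i hi
    calc a * ((N.choose i : ℝ) * ε ^ i * (1 - ε) ^ (N - i))
        = a ^ (i + 1) * ((ε / a) ^ i * (1 - ε) ^ (N - i) * N.choose i) := by
          rw [div_pow, pow_succ]
          field_simp
      _ ≤ a ^ d * ((ε / a) ^ i * (1 - ε) ^ (N - i) * N.choose i) := by
          gcongr
          exact Finset.mem_range.mp hi
  calc a * binomTail N ε d
      ≤ a ^ d * ∑ i ∈ Finset.range d, (ε / a) ^ i * (1 - ε) ^ (N - i) * N.choose i := by
        rw [binomTail, Finset.mul_sum, Finset.mul_sum]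
        exact Finset.sum_le_sum term_le
    _ ≤ a ^ d * (ε / a + (1 - ε)) ^ N := by
        gcongr
        exact sum_range_pow_mul_pow_mul_choose_le_add_pow (div_nonneg hε₀ ha₀.le) one_sub_nonneg N d

theorem mul_binomTail_le_pow_mul_exp (ha : 1 ≤ a) (hε₀ : 0 ≤ ε) (hε₁ : ε ≤ 1) (N d : ℕ) :
    a * binomTail N ε d ≤ a ^ d * Real.exp (-(N * (ε * (1 - 1 / a)))) := by
  have base_nonneg : 0 ≤ ε / a + (1 - ε) :=
    add_nonneg (div_nonneg hε₀ (zero_le_one.trans ha)) (sub_nonneg.mpr hε₁)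
  have base_le : ε / a + (1 - ε) ≤ Real.exp (-(ε * (1 - 1 / a))) :=
    calc ε / a + (1 - ε) = 1 - ε * (1 - 1 / a) := by ring
      _ ≤ Real.exp (-(ε * (1 - 1 / a))) := Real.one_sub_le_exp_neg _
  calc a * binomTail N ε d
      ≤ a ^ d * (ε / a + (1 - ε)) ^ N := mul_binomTail_le_pow_mul_pow ha hε₀ hε₁ N d
    _ ≤ a ^ d * Real.exp (-(ε * (1 - 1 / a))) ^ N :=
        mul_le_mul_of_nonneg_left (pow_le_pow_left₀ base_nonneg base_le N)
          (pow_nonneg (zero_le_one.trans ha) d)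
    _ = a ^ d * Real.exp (-(N * (ε * (1 - 1 / a)))) := by
        rw [← Real.exp_nat_mul, mul_neg]

theorem binomTail_le_of_alamo_bound_general {β : ℝ} (ha : 1 < a) (hε₀ : 0 < ε) (hε₁ : ε ≤ 1)
    (hβ : 0 < β) {N d : ℕ}
    (hN : a / (a - 1) * (1 / ε) * (((d : ℝ) - 1) * Real.log a + Real.log (1 / β)) ≤ N) :
    binomTail N ε d ≤ β := by
  have ha₀ : 0 < a := one_pos.trans ha
  have exponent_le : d * Real.log a - N * (ε * (1 - 1 / a)) ≤ Real.log a + Real.log β := by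
    have rate_pos : 0 < ε * (1 - 1 / a) :=
      mul_pos hε₀ (sub_pos.mpr ((div_lt_one ha₀).mpr ha))
    have rate_eq : a / (a - 1) * (1 / ε) = 1 / (ε * (1 - 1 / a)) := by field_simp
    rw [rate_eq, one_div_mul_eq_div, div_le_iff₀ rate_pos, one_div β, Real.log_inv] at hN
    linarith
  refine le_of_mul_le_mul_left ?_ ha₀
  calc a * binomTail N ε d
      ≤ a ^ d * Real.exp (-(N * (ε * (1 - 1 / a)))) :=
        mul_binomTail_le_pow_mul_exp ha.le hε₀.le hε₁ N d
    _ = Real.exp (d * Real.log a - N * (ε * (1 - 1 / a))) := by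
        rw [sub_eq_add_neg (d * Real.log a), Real.exp_add, Real.exp_nat_mul, Real.exp_log ha₀]
    _ ≤ Real.exp (Real.log a + Real.log β) := Real.exp_le_exp.mpr exponent_le
    _ = a * β := by rw [Real.exp_add, Real.exp_log ha₀, Real.exp_log hβ]

end Chernoff

/-- Explicit sample-size bound of Alamo et al.: if
`N ≥ (e/(e-1)) (1/ε) (d - 1 + ln(1/β))`, then `B(N, ε, d) ≤ β`. -/
theorem binomTail_le_of_alamo_bound
    (d : ℕ) (hd : 0 < d) (ε β : ℝ) (hε : ε ∈ Set.Ioo (0 : ℝ) 1)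
    (hβ : β ∈ Set.Ioo (0 : ℝ) 1) (N : ℕ)
    (hN : Real.exp 1 / (Real.exp 1 - 1) * (1 / ε) * ((d : ℝ) - 1 + Real.log (1 / β))
      ≤ (N : ℝ)) :
    binomTail N ε d ≤ β :=
  binomTail_le_of_alamo_bound_general (Real.one_lt_exp_iff.mpr one_pos) hε.1 hε.2.le hβ.1
    (by rwa [Real.log_exp, mul_one])
end
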